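/- Let M = Inv⟨X | u_i = v_i (i∈I)⟩ be an inverse monoid whose canonical greatest group image is the free group FG(X). Then M is strongly F-inverse. In particular, any inverse monoid of the form Inv⟨X | e_i = f_i (i∈I)⟩ with all e_i, f_i ∈ X̄* Dyck words is strongly F-inverse, and so is the one-relator special inverse monoid Inv⟨X | e = 1⟩ for an arbitrary Dyck word e ∈ X̄*. -/

import Mathlib

/-!
If `L → L'` is a free-group reduction step deleting a factor `a a⁻¹`, then in any inverse monoid
`[L] ≤ [L']`, because `a a⁻¹` is idempotent. Hence `[w] ≤ [red w]` for every word `w`, where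
`red w` is the free reduction of `w` (`mkW_natLe_reduce`).

Suppose now that σ on `Inv⟨X ∣ r⟩` is equality in the free group. Two σ-related words have the
same free reduction, so the element of the reduced word is the maximum of its σ-class. Moreover a
word labelling a simple path is reduced: otherwise some prefix `q` and the longer prefix
`q a a⁻¹` would be σ-related. So σ-related simple path words are literally equal, and the element
they represent is the top of its class (`stronglyFInverse_of_sigma_iff`).

For relations between Dyck words, σ is indeed equality in the free group
(`sigma_iff_of_relations`): the presentation maps onto `FG(X)`, so σ is contained in the kernel of
that map; conversely `[u] ≤ [red u]` and `≤` is contained in every group congruence.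
-/

/-! Common framework: words over a doubled alphabet, inverse monoids,
presentations of inverse monoids as quotients of the free monoid on letters,
the minimum group congruence, F-inverse and strongly F-inverse properties,
and the Margolis-Meakin / M_sF machinery. -/

namespace SFI

/-- A letter of the doubled alphabet X̄ = X ∪ X⁻¹: a generator together with a
polarity (`true` = the generator itself, `false` = its formal inverse). -/
abbrev Letter (X : Type*) := X × Bool

/-- Words over the doubled alphabet X̄, i.e. elements of the free monoid X̄*. -/
abbrev Word (X : Type*) := FreeMonoid (Letter X)

variable {X : Type*}

/-- The formal inverse of a letter. -/
def invL (a : Letter X) : Letter X := (a.1, !a.2)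

theorem invL_invL (a : Letter X) : invL (invL a) = a := by
  cases a; simp [invL]

/-- Formal inversion of a word: reverse the word and invert each letter. -/
def wordInv (w : Word X) : Word X :=
  FreeMonoid.ofList (((FreeMonoid.toList w).reverse).map invL)

theorem wordInv_mul (u v : Word X) : wordInv (u * v) = wordInv v * wordInv u := by
  simp only [wordInv, FreeMonoid.toList_mul, List.reverse_append, List.map_append,
    FreeMonoid.ofList_append]

theorem wordInv_wordInv (w : Word X) : wordInv (wordInv w) = w := by
  simp only [wordInv, FreeMonoid.toList_ofList, List.map_reverse, List.reverse_reverse,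
    List.map_map]
  have : (invL ∘ invL : Letter X → Letter X) = id := funext invL_invL
  rw [this, List.map_id, FreeMonoid.ofList_toList]

/-- Evaluation of a letter in a monoid-with-inversion, along a map `ι` of generators. -/
def evalLetter {M : Type*} [Monoid M] [Inv M] (ι : X → M) (a : Letter X) : M :=
  if a.2 then ι a.1 else (ι a.1)⁻¹

/-- Evaluation of a word in a monoid-with-inversion, along a map `ι` of generators:
`evalWord ι w` is the element `[w]` represented by the word `w`. -/
def evalWord {M : Type*} [Monoid M] [Inv M] (ι : X → M) (w : Word X) : M :=
  ((FreeMonoid.toList w).map (evalLetter ι)).prod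

/-- `M` is `X`-generated via `ι : X → M` if every element of `M` is represented by
some word over the doubled alphabet X̄. -/
def XGen {M : Type*} [Monoid M] [Inv M] (ι : X → M) : Prop :=
  Function.Surjective (evalWord ι)

/-- Inverse monoids, as a variety: a monoid with an involutive anti-automorphism `⁻¹`
such that `a a⁻¹ a = a` and idempotents (elements of the form `a a⁻¹`) commute.
This is equivalent to every element having a unique von Neumann inverse. -/
class InverseMonoid (M : Type*) extends Monoid M, Inv M where
  mul_inv_rev : ∀ a b : M, (a * b)⁻¹ = b⁻¹ * a⁻¹
  inv_inv : ∀ a : M, a⁻¹⁻¹ = a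
  mul_inv_mul : ∀ a : M, a * a⁻¹ * a = a
  idem_mul_comm : ∀ a b : M, a * a⁻¹ * (b * b⁻¹) = b * b⁻¹ * (a * a⁻¹)

/-- The natural partial order of an inverse monoid: `a ≤ b` iff `a = a a⁻¹ b`. -/
def natLe {M : Type*} [Monoid M] [Inv M] (a b : M) : Prop := a = a * a⁻¹ * b

/-- A congruence has group quotient iff every element of the quotient is (two-sided)
invertible. -/
def IsGroupCon {M : Type*} [Monoid M] (c : Con M) : Prop := ∀ x : c.Quotient, IsUnit x

/-- The minimum group congruence σ of a monoid: the infimum of all congruences whose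
quotient is a group.  For an inverse monoid this is the least group congruence, and
the quotient is the maximum group image. -/
def sigmaCon (M : Type*) [Monoid M] : Con M := sInf {c : Con M | IsGroupCon c}

/-- An inverse monoid is F-inverse if every σ-class has a maximum element in the
natural partial order. -/
def FInverse (M : Type*) [InverseMonoid M] : Prop :=
  ∀ a : M, ∃ m : M, sigmaCon M m a ∧ ∀ b : M, sigmaCon M b a → natLe b m

/-- The word obtained from the prefix of length `k` of `w`. -/
def wordPrefix (w : Word X) (k : ℕ) : Word X :=
  FreeMonoid.ofList ((FreeMonoid.toList w).take k)

/-- `w` labels a simple path starting at `1` in the Cayley graph of the maximum group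
image `S/σ` of the inverse monoid `S` (w.r.t. the generating map `ι`): the values of
distinct prefixes of `w` lie in distinct σ-classes, i.e. the vertices visited by the
path are pairwise distinct. -/
def IsSimplePathWordS {S : Type*} [InverseMonoid S] (ι : X → S) (w : Word X) : Prop :=
  ∀ j k : ℕ, j ≤ (FreeMonoid.toList w).length → k ≤ (FreeMonoid.toList w).length →
    sigmaCon S (evalWord ι (wordPrefix w j)) (evalWord ι (wordPrefix w k)) → j = k

/-- An X-generated inverse monoid `S` (via `ι`) is strongly F-inverse: it is F-inverse,
and the canonical morphism from the Margolis-Meakin expansion `M(S/σ, X)` to `S` sends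
all maximal elements of each σ-class of `M(S/σ,X)` (namely, the graphs spanned by simple
paths from 1 to a fixed vertex) to the single maximum element of the corresponding
σ-class of `S`.  Concretely: any two words labelling simple paths from 1 to the same
vertex of the Cayley graph of S/σ represent the same element of `S`, and this element
is the top of its σ-class. -/
def StronglyFInverse {S : Type*} [InverseMonoid S] (ι : X → S) : Prop :=
  XGen ι ∧ FInverse S ∧
    ∀ u v : Word X, IsSimplePathWordS ι u → IsSimplePathWordS ι v →
      sigmaCon S (evalWord ι u) (evalWord ι v) →
      evalWord ι u = evalWord ι v ∧
        ∀ t : Word X, sigmaCon S (evalWord ι t) (evalWord ι u) →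
          natLe (evalWord ι t) (evalWord ι u)

/-! ### Presentations of inverse monoids -/

/-- The generating pairs of the Wagner congruence on X̄*: `(w w⁻¹ w, w)` and
`(u u⁻¹ v v⁻¹, v v⁻¹ u u⁻¹)`. -/
def wagnerRel : Word X → Word X → Prop := fun a b =>
  (∃ w : Word X, a = w * wordInv w * w ∧ b = w) ∨
  (∃ u v : Word X, a = u * wordInv u * (v * wordInv v) ∧ b = v * wordInv v * (u * wordInv u))

/-- The congruence on X̄* generated by the Wagner relations together with the extra
defining relations `r`; the corresponding quotient is the inverse monoid
`Inv⟨X ∣ r⟩`.  (The relation set is closed under formal inversion; this does not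
change the congruence, since any monoid congruence on an inverse monoid automatically
respects inversion, but it makes the inversion on the quotient directly definable.) -/
def presCon (r : Word X → Word X → Prop) : Con (Word X) :=
  conGen (fun u v => (wagnerRel u v ∨ r u v) ∨
    (wagnerRel (wordInv u) (wordInv v) ∨ r (wordInv u) (wordInv v)))

/-- The inverse monoid presented by the defining relations `r` (together with the
Wagner relations), i.e. `Inv⟨X ∣ r⟩`, a quotient of the free inverse monoid FIM(X). -/
def InvPres (r : Word X → Word X → Prop) : Type _ := (presCon r).Quotient

instance (r : Word X → Word X → Prop) : Monoid (InvPres r) :=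
  inferInstanceAs (Monoid (presCon r).Quotient)

theorem presCon_inv {r : Word X → Word X → Prop} {u v : Word X} (h : presCon r u v) :
    presCon r (wordInv u) (wordInv v) := by
  show ConGen.Rel _ (wordInv u) (wordInv v)
  have h' : ConGen.Rel (fun u v => (wagnerRel u v ∨ r u v) ∨
      (wagnerRel (wordInv u) (wordInv v) ∨ r (wordInv u) (wordInv v))) u v := h
  clear h
  induction h' with
  | of a b hab =>
    apply ConGen.Rel.of
    rcases hab with hab | hab
    · exact Or.inr (by rwa [wordInv_wordInv, wordInv_wordInv])
    · exact Or.inl hab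
  | refl a => exact ConGen.Rel.refl _
  | symm _ ih => exact ConGen.Rel.symm ih
  | trans _ _ ih₁ ih₂ => exact ConGen.Rel.trans ih₁ ih₂
  | mul _ _ ih₁ ih₂ => rw [wordInv_mul, wordInv_mul]; exact ConGen.Rel.mul ih₂ ih₁

instance (r : Word X → Word X → Prop) : Inv (InvPres r) :=
  ⟨Quotient.map' wordInv (fun _ _ h => presCon_inv h)⟩

instance (r : Word X → Word X → Prop) : InverseMonoid (InvPres r) where
  mul_inv_rev a b := by
    refine Quotient.inductionOn₂' a b (fun u v => ?_)
    exact congrArg Quotient.mk'' (wordInv_mul u v)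
  inv_inv a := by
    refine Quotient.inductionOn' a (fun u => ?_)
    exact congrArg Quotient.mk'' (wordInv_wordInv u)
  mul_inv_mul a := by
    refine Quotient.inductionOn' a (fun u => ?_)
    exact Quotient.sound' (ConGen.Rel.of _ _ (Or.inl (Or.inl (Or.inl ⟨u, rfl, rfl⟩))))
  idem_mul_comm a b := by
    refine Quotient.inductionOn₂' a b (fun u v => ?_)
    exact Quotient.sound' (ConGen.Rel.of _ _ (Or.inl (Or.inl (Or.inr ⟨u, v, rfl, rfl⟩))))

/-- The element of `Inv⟨X ∣ r⟩` represented by the word `w`. -/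
def mkW (r : Word X → Word X → Prop) (w : Word X) : InvPres r := Quotient.mk'' w

/-- The canonical generating map `X → Inv⟨X ∣ r⟩`. -/
def genMap (r : Word X → Word X → Prop) : X → InvPres r :=
  fun x => mkW r (FreeMonoid.of (x, true))

/-- The defining relation of a special inverse monoid `Inv⟨X ∣ w = 1⟩`. -/
def specialRel (w : Word X) : Word X → Word X → Prop := fun a b => a = w ∧ b = 1

/-- The defining relations of a special inverse monoid `Inv⟨X ∣ wᵢ = 1 (i ∈ I)⟩`. -/
def familyRel {I : Type*} (w : I → Word X) : Word X → Word X → Prop :=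
  fun a b => ∃ i, a = w i ∧ b = 1

/-- The defining relations of an inverse monoid `Inv⟨X ∣ uᵢ = vᵢ (i ∈ I)⟩`. -/
def pairsRel {I : Type*} (p : I → Word X × Word X) : Word X → Word X → Prop :=
  fun a b => ∃ i, a = (p i).1 ∧ b = (p i).2

/-! ### Cayley graphs -/

section Graph

variable {G : Type*} [Monoid G] [Inv G]

/-- The set of (inverse-closed pairs of) edges of the Cayley graph traversed by the
path starting at `g` and labelled by the list of letters `l`; an edge from `h`
labelled by the letter `a` is recorded as the pair `(h, a)`, together with its
inverse edge `(h·[a], a⁻¹)`. -/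
def pathEdges (ιG : X → G) : G → List (Letter X) → Set (G × Letter X)
  | _, [] => ∅
  | g, a :: l =>
      insert (g, a) (insert (g * evalLetter ιG a, invL a)
        (pathEdges ιG (g * evalLetter ιG a) l))

/-- `Γ_w`: the subgraph (set of edges) of the Cayley graph of `G` spanned by the path
starting at `1` labelled by the word `w`. -/
def Gamma (ιG : X → G) (w : Word X) : Set (G × Letter X) :=
  pathEdges ιG 1 (FreeMonoid.toList w)

/-- `w` labels a simple path starting at `1` in the Cayley graph of `G`: the values of
distinct prefixes of `w` are distinct vertices. -/
def IsSimplePathWordG (ιG : X → G) (w : Word X) : Prop :=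
  ∀ j k : ℕ, j ≤ (FreeMonoid.toList w).length → k ≤ (FreeMonoid.toList w).length →
    evalWord ιG (wordPrefix w j) = evalWord ιG (wordPrefix w k) → j = k

/-- `w` labels a simple cycle (based at `1`) in the Cayley graph of `G`: `w` is
non-empty, `w = 1` holds in `G`, and the initial vertices of the edges of the cycle
(i.e. the values of the proper prefixes of `w`) are pairwise distinct. -/
def IsSimpleCycleWordG (ιG : X → G) (w : Word X) : Prop :=
  w ≠ 1 ∧ evalWord ιG w = 1 ∧
    ∀ j k : ℕ, j < (FreeMonoid.toList w).length → k < (FreeMonoid.toList w).length →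
      evalWord ιG (wordPrefix w j) = evalWord ιG (wordPrefix w k) → j = k

/-- The defining relation of the Margolis-Meakin expansion `M(G,X)` as a quotient of
X̄*: two words are identified iff they span the same subgraph of the Cayley graph and
represent the same element of `G`. -/
def mmRel (ιG : X → G) : Word X → Word X → Prop := fun u v =>
  Gamma ιG u = Gamma ιG v ∧ evalWord ιG u = evalWord ιG v

/-- The generating pairs of the congruence ξ_G: two words labelling simple paths from
`1` to the same element of `G` are identified. -/
def spRel (ιG : X → G) : Word X → Word X → Prop := fun u v =>
  IsSimplePathWordG ιG u ∧ IsSimplePathWordG ιG v ∧ evalWord ιG u = evalWord ιG v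

/-- The defining relations of `M_sF(G,X) = M(G,X)/ξ_G` as a quotient of X̄*. -/
def msfRel (ιG : X → G) : Word X → Word X → Prop := fun u v =>
  mmRel ιG u v ∨ spRel ιG u v

/-- `M_sF(G,X)`: the quotient of the Margolis-Meakin expansion `M(G,X)` by the
congruence ξ_G identifying, for each `g ∈ G`, all graphs spanned by simple paths
from `1` to `g`. -/
abbrev MsF (ιG : X → G) := InvPres (msfRel ιG)

end Graph

/-! ### Reduced words, cyclic words, linked words, invertible pieces -/

/-- A word over X̄ is reduced if it has no factor of the form `x x⁻¹` or `x⁻¹ x`. -/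
def ReducedWord (w : Word X) : Prop :=
  ∀ a : Letter X, ¬ ([a, invL a] <:+: FreeMonoid.toList w)

/-- A word over X̄ is cyclically reduced if it is reduced and its first and last
letters are not mutually inverse. -/
def CyclicallyReducedWord (w : Word X) : Prop :=
  ReducedWord w ∧ ∀ a : Letter X, (FreeMonoid.toList w).head? = some a →
    (FreeMonoid.toList w).getLast? ≠ some (invL a)

/-- A cyclically reduced word is cyclic with respect to `(G,X)` if it labels a simple
cycle in the Cayley graph of `G`. -/
def IsCyclicWord {G : Type*} [Monoid G] [Inv G] (ιG : X → G) (w : Word X) : Prop :=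
  CyclicallyReducedWord w ∧ IsSimpleCycleWordG ιG w

/-- `w'` is a cyclic conjugate of `w`. -/
def IsCyclicConjugate (w' w : Word X) : Prop := ∃ u v : Word X, w' = u * v ∧ v * u = w

/-- A word is linked with respect to `(M, ι)` if for every pair of adjacent letters
`a, b` of the word, `a⁻¹ a = b b⁻¹` holds in `M` (the letters are "matching"). -/
def Linked {M : Type*} [Monoid M] [Inv M] (ι : X → M) (w : Word X) : Prop :=
  ∀ (p q : Word X) (a b : Letter X),
    w = p * (FreeMonoid.of a * (FreeMonoid.of b * q)) →
    (evalLetter ι a)⁻¹ * evalLetter ι a = evalLetter ι b * (evalLetter ι b)⁻¹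

/-- `ws` is the factorisation of the word `w` into minimal invertible pieces with
respect to `(M, ι)`: `w` is the concatenation of the members of `ws`, each of which is
a non-empty word representing an invertible element of `M` such that no proper
non-empty prefix or suffix represents an invertible element of `M`. -/
def IsPieceDecomp {M : Type*} [Monoid M] [Inv M] (ι : X → M) (w : Word X)
    (ws : List (Word X)) : Prop :=
  ws.prod = w ∧ ∀ z ∈ ws, z ≠ 1 ∧ IsUnit (evalWord ι z) ∧
    ∀ p s : Word X, z = p * s → p ≠ 1 → s ≠ 1 →
      ¬ IsUnit (evalWord ι p) ∧ ¬ IsUnit (evalWord ι s)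


/-! ### The natural partial order -/

section NaturalOrder

variable {M : Type*} [InverseMonoid M]

theorem natLe_refl (a : M) : natLe a a := (InverseMonoid.mul_inv_mul a).symm

theorem natLe_trans {a b c : M} (hab : natLe a b) (hbc : natLe b c) : natLe a c := by
  unfold natLe at *
  have h₁ : b * b⁻¹ * a = a := by
    calc b * b⁻¹ * a = b * b⁻¹ * (a * a⁻¹ * b) := by rw [← hab]
      _ = b * b⁻¹ * (a * a⁻¹) * b := by simp only [mul_assoc]
      _ = a * a⁻¹ * (b * b⁻¹) * b := by rw [InverseMonoid.idem_mul_comm]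
      _ = a * a⁻¹ * (b * b⁻¹ * b) := by simp only [mul_assoc]
      _ = a := by rw [InverseMonoid.mul_inv_mul, ← hab]
  have h₂ : a * a⁻¹ * (b * b⁻¹) = a * a⁻¹ := by
    rw [InverseMonoid.idem_mul_comm, ← mul_assoc, h₁]
  calc a = a * a⁻¹ * (b * b⁻¹ * c) := by rw [← hbc, ← hab]
    _ = a * a⁻¹ * (b * b⁻¹) * c := by simp only [mul_assoc]
    _ = a * a⁻¹ * c := by rw [h₂]

/-- Deleting an idempotent factor `c c⁻¹` goes up in the natural order. -/
theorem natLe_delete (u c v : M) : natLe (u * (c * c⁻¹) * v) (u * v) := by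
  unfold natLe
  have he : (c * c⁻¹)⁻¹ = c * c⁻¹ := by
    rw [InverseMonoid.mul_inv_rev, InverseMonoid.inv_inv]
  have hee : c * c⁻¹ * (c * c⁻¹) = c * c⁻¹ := by
    rw [← mul_assoc, InverseMonoid.mul_inv_mul]
  have hu : u * (u⁻¹ * u) = u := by rw [← mul_assoc, InverseMonoid.mul_inv_mul]
  have hv := InverseMonoid.mul_inv_mul v
  have huc : ∀ d : M, u⁻¹ * u * (d * d⁻¹) = d * d⁻¹ * (u⁻¹ * u) := by
    intro d
    have := InverseMonoid.idem_mul_comm u⁻¹ d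
    rwa [InverseMonoid.inv_inv] at this
  have huce := huc c
  have hcv := InverseMonoid.idem_mul_comm c v
  rw [InverseMonoid.mul_inv_rev, InverseMonoid.mul_inv_rev, he]
  generalize c * c⁻¹ = e at *
  symm
  calc u * e * v * (v⁻¹ * (e * u⁻¹)) * (u * v)
      = u * (e * (v * v⁻¹)) * e * (u⁻¹ * u) * v := by simp only [mul_assoc]
    _ = u * (v * v⁻¹) * (e * e) * (u⁻¹ * u) * v := by rw [hcv]; simp only [mul_assoc]
    _ = u * (v * v⁻¹ * e) * (u⁻¹ * u) * v := by rw [hee]; simp only [mul_assoc]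
    _ = u * e * (v * v⁻¹ * (u⁻¹ * u)) * v := by rw [← hcv]; simp only [mul_assoc]
    _ = u * e * (u⁻¹ * u) * (v * v⁻¹ * v) := by rw [← huc v]; simp only [mul_assoc]
    _ = u * (e * (u⁻¹ * u)) * v := by rw [hv]; simp only [mul_assoc]
    _ = u * (u⁻¹ * u) * e * v := by rw [← huce]; simp only [mul_assoc]
    _ = u * e * v := by rw [hu]

/-- The natural order is contained in σ: in a group quotient the idempotent `a a⁻¹` becomes `1`. -/
theorem sigmaCon_of_natLe {a b : M} (h : natLe a b) : sigmaCon M a b := by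
  intro c hc
  have hid : ((a * a⁻¹ : M) : c.Quotient) = 1 := by
    refine (hc ((a * a⁻¹ : M) : c.Quotient)).mul_left_cancel ?_
    rw [mul_one, ← Con.coe_mul, ← mul_assoc, InverseMonoid.mul_inv_mul]
  rw [← Con.eq]
  calc (a : c.Quotient) = ((a * a⁻¹ * b : M) : c.Quotient) := congrArg _ h
    _ = b := by rw [Con.coe_mul, hid, one_mul]

end NaturalOrder

/-! ### Words and the free group -/

theorem evalWord_mul {M : Type*} [Monoid M] [Inv M] (ι : X → M) (u v : Word X) :
    evalWord ι (u * v) = evalWord ι u * evalWord ι v := by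
  simp [evalWord]

theorem evalWord_of_eq_mk (w : Word X) :
    evalWord (FreeGroup.of : X → FreeGroup X) w = FreeGroup.mk (FreeMonoid.toList w) := by
  have h := FreeGroup.lift_mk (f := (FreeGroup.of : X → FreeGroup X)) (L := FreeMonoid.toList w)
  rw [FreeGroup.lift_of_eq_id, MonoidHom.id_apply] at h
  rw [h, evalWord]
  congr 1
  refine List.map_congr_left fun a _ => ?_
  rcases a with ⟨x, _ | _⟩ <;> rfl

theorem evalWord_of_wordInv (w : Word X) :
    evalWord (FreeGroup.of : X → FreeGroup X) (wordInv w) =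
      (evalWord (FreeGroup.of : X → FreeGroup X) w)⁻¹ := by
  rw [evalWord_of_eq_mk, evalWord_of_eq_mk, FreeGroup.inv_mk]
  simp only [wordInv, FreeMonoid.toList_ofList, FreeGroup.invRev, List.map_reverse]
  rfl

section Presentation

variable (r : Word X → Word X → Prop)

theorem mkW_mul (u v : Word X) : mkW r (u * v) = mkW r u * mkW r v := rfl

theorem mkW_surjective (a : InvPres r) : ∃ w, mkW r w = a :=
  Quotient.inductionOn' a fun w => ⟨w, rfl⟩

theorem mkW_of (a : Letter X) : mkW r (FreeMonoid.of a) = evalLetter (genMap r) a := by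
  rcases a with ⟨x, _ | _⟩ <;> rfl

theorem evalWord_genMap (w : Word X) : evalWord (genMap r) w = mkW r w := by
  induction w using FreeMonoid.inductionOn' with
  | one => rfl
  | of_mul a w ih =>
    rw [evalWord_mul, mkW_mul, ih, mkW_of]
    congr 1
    simp [evalWord]

theorem mkW_natLe_of_red {L L' : List (Letter X)} (h : FreeGroup.Red L L') :
    natLe (mkW r (FreeMonoid.ofList L)) (mkW r (FreeMonoid.ofList L')) := by
  induction h with
  | refl => exact natLe_refl _
  | tail _ hstep ih =>
    refine natLe_trans ih ?_
    obtain @⟨L₁, L₂, x, b⟩ := hstep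
    have h := natLe_delete (mkW r (FreeMonoid.ofList L₁)) (mkW r (FreeMonoid.of (x, b)))
      (mkW r (FreeMonoid.ofList L₂))
    rw [mul_assoc] at h
    exact h

open Classical in
/-- Every word lies below its free reduction. -/
theorem mkW_natLe_reduce (w : Word X) :
    natLe (mkW r w) (mkW r (FreeMonoid.ofList (FreeGroup.reduce (FreeMonoid.toList w)))) :=
  mkW_natLe_of_red r FreeGroup.reduce.red

open Classical in
/-- Words with the same value in the free group are σ-related, whatever the relations. -/
theorem sigma_of_evalWord_eq {u v : Word X}
    (h : evalWord (FreeGroup.of : X → FreeGroup X) u =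
      evalWord (FreeGroup.of : X → FreeGroup X) v) :
    sigmaCon (InvPres r) (mkW r u) (mkW r v) := by
  rw [evalWord_of_eq_mk, evalWord_of_eq_mk] at h
  have hu := sigmaCon_of_natLe (mkW_natLe_reduce r u)
  have hv := sigmaCon_of_natLe (mkW_natLe_reduce r v)
  rw [← FreeGroup.reduce.sound h] at hv
  exact (sigmaCon _).trans hu ((sigmaCon _).symm hv)

/-- A word labelling a simple path in the Cayley graph of the maximum group image is reduced. -/
theorem isReduced_of_simplePath {u : Word X} (hu : IsSimplePathWordS (genMap r) u) :
    FreeGroup.IsReduced (FreeMonoid.toList u) := by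
  refine FreeGroup.IsReduced.of_forall_not_step fun L' hstep => ?_
  generalize hL : FreeMonoid.toList u = L at hstep
  obtain @⟨L₁, L₂, x, b⟩ := hstep
  have key := hu L₁.length (L₁.length + 2) (by rw [hL]; simp) (by rw [hL]; simp) ?_
  · omega
  · rw [evalWord_genMap, evalWord_genMap]
    apply sigma_of_evalWord_eq
    rw [evalWord_of_eq_mk, evalWord_of_eq_mk]
    simp only [wordPrefix, hL, FreeMonoid.toList_ofList]
    have h₁ : (L₁ ++ (x, b) :: (x, !b) :: L₂).take L₁.length = L₁ := by simp
    have h₂ : (L₁ ++ (x, b) :: (x, !b) :: L₂).take (L₁.length + 2) =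
        L₁ ++ [(x, b), (x, !b)] := by
      rw [List.take_length_add_append]; rfl
    rw [h₁, h₂]
    have hs : FreeGroup.Red.Step (L₁ ++ [(x, b), (x, !b)]) (L₁ ++ []) := .not
    rw [List.append_nil] at hs
    exact (Quot.sound hs).symm

open Classical in
/-- If σ on `Inv⟨X ∣ r⟩` is equality in the free group, the presentation is strongly
F-inverse. -/
theorem stronglyFInverse_of_sigma_iff
    (hmax : ∀ u v : Word X, sigmaCon (InvPres r) (mkW r u) (mkW r v) ↔
      evalWord (FreeGroup.of : X → FreeGroup X) u =
        evalWord (FreeGroup.of : X → FreeGroup X) v) :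
    StronglyFInverse (genMap r) := by
  have hred : ∀ {u v : Word X}, sigmaCon (InvPres r) (mkW r u) (mkW r v) →
      FreeGroup.reduce (FreeMonoid.toList u) = FreeGroup.reduce (FreeMonoid.toList v) := by
    intro u v h
    have := (hmax u v).1 h
    rw [evalWord_of_eq_mk, evalWord_of_eq_mk] at this
    exact FreeGroup.reduce.sound this
  refine ⟨fun a => ?_, fun a => ?_, fun u v hu hv huv => ?_⟩
  · obtain ⟨w, rfl⟩ := mkW_surjective r a
    exact ⟨w, evalWord_genMap r w⟩
  · obtain ⟨w, rfl⟩ := mkW_surjective r a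
    refine ⟨_, (sigmaCon _).symm (sigmaCon_of_natLe (mkW_natLe_reduce r w)), fun b hb => ?_⟩
    obtain ⟨t, rfl⟩ := mkW_surjective r b
    rw [← hred hb]
    exact mkW_natLe_reduce r t
  · have hu' := (isReduced_of_simplePath r hu).reduce_eq
    have hv' := (isReduced_of_simplePath r hv).reduce_eq
    simp only [evalWord_genMap] at huv ⊢
    refine ⟨?_, fun t ht => ?_⟩
    · have h := hred huv
      rw [hu', hv'] at h
      rw [FreeMonoid.toList.injective h]
    · have h := mkW_natLe_reduce r t
      rwa [hred ht, hu', FreeMonoid.ofList_toList] at h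

/-! ### Relations that hold in the free group -/

theorem evalWord_of_eq_of_presCon
    (hr : ∀ u v, r u v → evalWord (FreeGroup.of : X → FreeGroup X) u =
      evalWord (FreeGroup.of : X → FreeGroup X) v) {u v : Word X} (h : presCon r u v) :
    evalWord (FreeGroup.of : X → FreeGroup X) u =
      evalWord (FreeGroup.of : X → FreeGroup X) v := by
  have hw : ∀ u v : Word X, wagnerRel u v ∨ r u v →
      evalWord (FreeGroup.of : X → FreeGroup X) u =
        evalWord (FreeGroup.of : X → FreeGroup X) v := by
    rintro _ _ ((⟨w, rfl, rfl⟩ | ⟨a, b, rfl, rfl⟩) | h)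
    · simp [evalWord_mul, evalWord_of_wordInv]
    · simp [evalWord_mul, evalWord_of_wordInv]
    · exact hr _ _ h
  change ConGen.Rel _ u v at h
  induction h with
  | of a b hab =>
    rcases hab with hab | hab
    · exact hw _ _ hab
    · have := hw _ _ hab
      rwa [evalWord_of_wordInv, evalWord_of_wordInv, inv_inj] at this
  | refl => rfl
  | symm _ ih => exact ih.symm
  | trans _ _ ih₁ ih₂ => exact ih₁.trans ih₂
  | mul _ _ ih₁ ih₂ => rw [evalWord_mul, evalWord_mul, ih₁, ih₂]

/-- If the defining relations hold in the free group, then σ on `Inv⟨X ∣ r⟩` is equality in the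
free group. -/
theorem sigma_iff_of_relations
    (hr : ∀ u v, r u v → evalWord (FreeGroup.of : X → FreeGroup X) u =
      evalWord (FreeGroup.of : X → FreeGroup X) v) (u v : Word X) :
    sigmaCon (InvPres r) (mkW r u) (mkW r v) ↔
      evalWord (FreeGroup.of : X → FreeGroup X) u =
        evalWord (FreeGroup.of : X → FreeGroup X) v := by
  refine ⟨fun h => ?_, sigma_of_evalWord_eq r⟩
  let f : InvPres r →* FreeGroup X :=
    { toFun := Quotient.lift (evalWord FreeGroup.of)
        fun _ _ h => evalWord_of_eq_of_presCon r hr h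
      map_one' := rfl
      map_mul' := fun a b => by
        obtain ⟨a, rfl⟩ := mkW_surjective r a
        obtain ⟨b, rfl⟩ := mkW_surjective r b
        exact evalWord_mul _ a b }
  have hinv : ∀ a : InvPres r, f a⁻¹ = (f a)⁻¹ := by
    intro a
    obtain ⟨w, rfl⟩ := mkW_surjective r a
    exact evalWord_of_wordInv w
  refine h (Con.ker f) fun x => ?_
  induction x using Con.induction_on with
  | H a =>
    refine ⟨⟨a, (a⁻¹ : InvPres r), ?_, ?_⟩, rfl⟩
    · rw [← Con.coe_mul, ← Con.coe_one, Con.eq, Con.ker_rel, map_mul, hinv, mul_inv_cancel,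
        map_one]
    · rw [← Con.coe_mul, ← Con.coe_one, Con.eq, Con.ker_rel, map_mul, hinv, inv_mul_cancel,
        map_one]

end Presentation

/-- Let `M = Inv⟨X ∣ uᵢ = vᵢ (i ∈ I)⟩` be an inverse monoid whose
canonical greatest group image is the free group `FG(X)` (i.e. two words represent
σ-related elements of `M` precisely when they have the same value in `FG(X)`).
Then `M` is strongly F-inverse.  In particular, any inverse monoid presented by
relations `eᵢ = fᵢ` between Dyck words (words whose free-group value is trivial) is
strongly F-inverse, and so is the one-relator special inverse monoid
`Inv⟨X ∣ e = 1⟩` for an arbitrary Dyck word `e`. -/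
theorem statement_19 {X : Type u} {I : Type v} (p : I → Word X × Word X)
    (hmax : ∀ u v : Word X,
      sigmaCon (InvPres (pairsRel p)) (mkW (pairsRel p) u) (mkW (pairsRel p) v) ↔
        evalWord (FreeGroup.of : X → FreeGroup X) u =
          evalWord (FreeGroup.of : X → FreeGroup X) v) :
    StronglyFInverse (genMap (pairsRel p)) ∧
    (∀ (J : Type w) (ef : J → Word X × Word X),
      (∀ j : J, evalWord (FreeGroup.of : X → FreeGroup X) (ef j).1 = 1 ∧
        evalWord (FreeGroup.of : X → FreeGroup X) (ef j).2 = 1) →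
      StronglyFInverse (genMap (pairsRel ef))) ∧
    (∀ e : Word X, evalWord (FreeGroup.of : X → FreeGroup X) e = 1 →
      StronglyFInverse (genMap (specialRel e))) := by
  refine ⟨stronglyFInverse_of_sigma_iff _ hmax, fun J ef hef => ?_, fun e he => ?_⟩
  · refine stronglyFInverse_of_sigma_iff _ (sigma_iff_of_relations _ ?_)
    rintro _ _ ⟨j, rfl, rfl⟩
    rw [(hef j).1, (hef j).2]
  · refine stronglyFInverse_of_sigma_iff _ (sigma_iff_of_relations _ ?_)
    rintro _ _ ⟨rfl, rfl⟩
    rw [he]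
    rfl

end SFI
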